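/- arXiv:1607.03058 — 6 statements merged into one kernel-verified Lean document; each statement's English description precedes it below -/
import Mathlib

section
/- Let n ≥ 1 and let A be an invertible n×n integer matrix having no root-of-unity eigenvalue. Then every subgroup of finite index in ℤⁿ ⋊_A ℤ has trivial center; in particular the center of ℤⁿ ⋊_A ℤ itself is trivial. -/
/-- The multiplicative automorphism of `Multiplicative (Fin n → ℤ)` determined by an
invertible integer matrix `A`, acting by `v ↦ A v`. -/
noncomputable def glMulAut {n : ℕ} (A : GL (Fin n) ℤ) : MulAut (Multiplicative (Fin n → ℤ)) :=
  AddEquiv.toMultiplicative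
    ((Matrix.GeneralLinearGroup.toLin A).toLinearEquiv.toAddEquiv)

/-- The action of `ℤ` on `ℤⁿ = Fin n → ℤ` sending `k` to the `k`-th power of the
automorphism determined by `A`. -/
noncomputable def glZAction {n : ℕ} (A : GL (Fin n) ℤ) :
    Multiplicative ℤ →* MulAut (Multiplicative (Fin n → ℤ)) :=
  zpowersHom _ (glMulAut A)

/-- The semidirect product `ℤⁿ ⋊_A ℤ`. -/
noncomputable abbrev ZSemidirect {n : ℕ} (A : GL (Fin n) ℤ) : Type :=
  SemidirectProduct (Multiplicative (Fin n → ℤ)) (Multiplicative ℤ) (glZAction A)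

/-- `A` has no root-of-unity eigenvalue: `det (Aᵏ − 1) ≠ 0` for every integer `k ≥ 1`. -/
def NoRootOfUnityEigenvalue {n : ℕ} (A : GL (Fin n) ℤ) : Prop :=
  ∀ k : ℤ, 1 ≤ k → (((A ^ k : GL (Fin n) ℤ) : Matrix (Fin n) (Fin n) ℤ) - 1).det ≠ 0

theorem glMulAut_ofAdd {n : ℕ} (A : GL (Fin n) ℤ) (w : Fin n → ℤ) :
    glMulAut A (Multiplicative.ofAdd w) =
      Multiplicative.ofAdd (Matrix.mulVec (A : Matrix (Fin n) (Fin n) ℤ) w) :=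
  rfl

theorem glMulAut_zpow {n : ℕ} (A : GL (Fin n) ℤ) (k : ℤ) :
    glMulAut A ^ k = glMulAut (A ^ k) := by
  let f : GL (Fin n) ℤ →* MulAut (Multiplicative (Fin n → ℤ)) :=
    MonoidHom.mk' glMulAut fun B C => by
      ext1 w
      induction w using Multiplicative.rec with
      | ofAdd w => simp [glMulAut_ofAdd, MulAut.mul_apply, Matrix.mulVec_mulVec]
  exact (map_zpow f A k).symm

theorem glZAction_ofAdd {n : ℕ} (A : GL (Fin n) ℤ) (k : ℤ) (w : Fin n → ℤ) :
    glZAction A (Multiplicative.ofAdd k) (Multiplicative.ofAdd w) =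
      Multiplicative.ofAdd
        (Matrix.mulVec ((A ^ k : GL (Fin n) ℤ) : Matrix (Fin n) (Fin n) ℤ) w) := by
  rw [← glMulAut_ofAdd, ← glMulAut_zpow]
  rfl

/-- A nonzero power of `A` fixes only the zero vector. -/
theorem NoRootOfUnityEigenvalue.eq_zero_of_zpow_mulVec_eq {n : ℕ} {A : GL (Fin n) ℤ}
    (hA : NoRootOfUnityEigenvalue A) {k : ℤ} (hk : k ≠ 0) {w : Fin n → ℤ}
    (h : Matrix.mulVec ((A ^ k : GL (Fin n) ℤ) : Matrix (Fin n) (Fin n) ℤ) w = w) : w = 0 := by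
  wlog hpos : 0 < k generalizing k
  · refine this (neg_ne_zero.mpr hk) ?_ (by omega)
    conv_lhs => rw [← h]
    rw [Matrix.mulVec_mulVec, ← Units.val_mul, ← zpow_add]
    simp
  · refine Matrix.eq_zero_of_mulVec_eq_zero (hA k hpos) ?_
    rw [Matrix.sub_mulVec, h, Matrix.one_mulVec, sub_self]

/-- An element of `ℤⁿ ⋊_A ℤ` commuting with a positive power of every element is trivial. -/
theorem NoRootOfUnityEigenvalue.eq_one_of_commute_pow {n : ℕ} (hn : 1 ≤ n) {A : GL (Fin n) ℤ}
    (hA : NoRootOfUnityEigenvalue A) {z : ZSemidirect A}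
    (hz : ∀ g : ZSemidirect A, ∃ m : ℕ, 0 < m ∧ Commute z (g ^ m)) : z = 1 := by
  obtain ⟨v, k⟩ := z
  induction v using Multiplicative.rec with | ofAdd v
  induction k using Multiplicative.rec with | ofAdd k
  obtain rfl : v = 0 := by
    obtain ⟨m, hm, h⟩ := hz (SemidirectProduct.inr (Multiplicative.ofAdd 1))
    have h := congrArg SemidirectProduct.left h.eq
    rw [← map_pow, ← ofAdd_nsmul] at h
    simp only [SemidirectProduct.mul_left, SemidirectProduct.left_inr,
      SemidirectProduct.right_inr, map_one, mul_one, one_mul, glZAction_ofAdd] at h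
    refine hA.eq_zero_of_zpow_mulVec_eq (k := m • 1) (by simp; omega) ?_
    exact Multiplicative.ofAdd.injective h.symm
  obtain rfl : k = 0 := by
    by_contra hk
    obtain ⟨m, hm, h⟩ := hz (SemidirectProduct.inl (Multiplicative.ofAdd fun _ => 1))
    have h := congrArg SemidirectProduct.left h.eq
    rw [← map_pow, ← ofAdd_nsmul] at h
    simp only [SemidirectProduct.mul_left, SemidirectProduct.left_inl,
      SemidirectProduct.right_inl, map_one, mul_one, one_mul, glZAction_ofAdd, ofAdd_zero] at h
    have h0 := hA.eq_zero_of_zpow_mulVec_eq hk (Multiplicative.ofAdd.injective h)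
    have := congrFun h0 ⟨0, hn⟩
    simp at this
    omega
  rfl

/-- Every finite-index subgroup of `ℤⁿ ⋊_A ℤ` has trivial center when `A` has no
root-of-unity eigenvalue; in particular the center of `ℤⁿ ⋊_A ℤ` itself is trivial. -/
theorem stmt2 {n : ℕ} (hn : 1 ≤ n) (A : GL (Fin n) ℤ)
    (hA : NoRootOfUnityEigenvalue A) :
    (∀ K : Subgroup (ZSemidirect A), K.index ≠ 0 → Subgroup.center K = ⊥) ∧
      Subgroup.center (ZSemidirect A) = ⊥ := by
  refine ⟨fun K hK => (Subgroup.eq_bot_iff_forall _).mpr fun z hz => ?_,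
    (Subgroup.eq_bot_iff_forall _).mpr fun z hz => ?_⟩
  · refine Subtype.ext (hA.eq_one_of_commute_pow hn fun g => ?_)
    obtain ⟨m, hm, -, hg⟩ := Subgroup.exists_pow_mem_of_index_ne_zero hK g
    exact ⟨m, hm, congrArg Subtype.val (Subgroup.mem_center_iff.mp hz ⟨g ^ m, hg⟩).symm⟩
  · exact hA.eq_one_of_commute_pow hn fun g =>
      ⟨1, one_pos, (Subgroup.mem_center_iff.mp hz (g ^ 1)).symm⟩
end

section
/- Let n ≥ 1 and let A be an invertible n×n integer matrix having no root-of-unity eigenvalue. Then the group ℤⁿ ⋊_A ℤ has no commutative subgroup of finite index (it is not virtually abelian). -/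
/-- The integer `k` acts on `ℤⁿ` by multiplication by the matrix `A ^ k`. -/
lemma glZAction_ofAdd_apply {n : ℕ} (A : GL (Fin n) ℤ) (k : ℤ) (v : Fin n → ℤ) :
    glZAction A (Multiplicative.ofAdd k) (Multiplicative.ofAdd v) =
      Multiplicative.ofAdd
        (((A ^ k : GL (Fin n) ℤ) : Matrix (Fin n) (Fin n) ℤ).mulVec v) := by
  let f : GL (Fin n) ℤ →* MulAut (Multiplicative (Fin n → ℤ)) :=
    { toFun := glMulAut
      map_one' := by ext v; simp [glMulAut]
      map_mul' := fun A B => by ext v; simp [glMulAut] }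
  have h : glZAction A (Multiplicative.ofAdd k) = glMulAut (A ^ k) :=
    (map_zpow f A k).symm
  rw [h]
  rfl

/-- No power `A ^ k` with `k ≥ 1` fixes a nonzero vector if `A` has no root-of-unity
eigenvalue. -/
lemma NoRootOfUnityEigenvalue.eq_zero_of_mulVec_eq {n : ℕ} {A : GL (Fin n) ℤ}
    (hA : NoRootOfUnityEigenvalue A) {k : ℤ} (hk : 1 ≤ k) {v : Fin n → ℤ}
    (hv : ((A ^ k : GL (Fin n) ℤ) : Matrix (Fin n) (Fin n) ℤ).mulVec v = v) : v = 0 :=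
  Matrix.eq_zero_of_mulVec_eq_zero (hA k hk) (by rw [Matrix.sub_mulVec, hv]; simp)

/-- `ℤⁿ ⋊_A ℤ` is not virtually abelian when `A` has no root-of-unity eigenvalue:
it has no commutative subgroup of finite index. -/
theorem stmt3 {n : ℕ} (hn : 1 ≤ n) (A : GL (Fin n) ℤ)
    (hA : NoRootOfUnityEigenvalue A) :
    ¬ ∃ K : Subgroup (ZSemidirect A), K.index ≠ 0 ∧
        ∀ x ∈ K, ∀ y ∈ K, x * y = y * x := by
  rintro ⟨K, hK, hcomm⟩
  let v : Fin n → ℤ := fun _ => 1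
  obtain ⟨a, ha, -, hx⟩ := Subgroup.exists_pow_mem_of_index_ne_zero hK
    (SemidirectProduct.inl (Multiplicative.ofAdd v))
  obtain ⟨k, hk, -, hy⟩ := Subgroup.exists_pow_mem_of_index_ne_zero hK
    (SemidirectProduct.inr (Multiplicative.ofAdd (1 : ℤ)))
  rw [← map_pow, ← ofAdd_nsmul] at hx hy
  have h := congrArg SemidirectProduct.left (hcomm _ hy _ hx)
  simp only [SemidirectProduct.mul_left, SemidirectProduct.left_inr,
    SemidirectProduct.right_inr, SemidirectProduct.left_inl, SemidirectProduct.right_inl,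
    one_mul, map_one, mul_one, glZAction_ofAdd_apply] at h
  have h0 := hA.eq_zero_of_mulVec_eq (by simp; omega) (Multiplicative.ofAdd.injective h)
  have := congrFun h0 ⟨0, hn⟩
  simp [v] at this
  omega
end

section
/- For every n ≥ 1 and every invertible n×n integer matrix A, the abelianization of ℤⁿ ⋊_A ℤ is isomorphic to the product ((Fin n → ℤ) ⧸ range(A − 1)) × ℤ, where A − 1 is regarded as a ℤ-linear endomorphism of ℤⁿ = (Fin n → ℤ) and range(A − 1) is its image. -/
/-- A function invariant under an automorphism is invariant under all its integer powers. -/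
theorem MulAut.apply_zpow_of_invariant {N X : Type*} [Mul N] (f : N → X) (a : MulAut N)
    (h : ∀ v, f (a v) = f v) (k : ℤ) (v : N) : f ((a ^ k) v) = f v := by
  induction k generalizing v with
  | zero => simp
  | succ k ih => rw [zpow_add_one, MulAut.mul_apply, ih, h]
  | pred k ih => rw [zpow_sub_one, MulAut.mul_apply, ih, ← h, MulAut.apply_inv_self]

theorem glZAction_ofAdd_one {n : ℕ} (A : GL (Fin n) ℤ) :
    glZAction A (Multiplicative.ofAdd 1) = glMulAut A := by
  simp [glZAction]

/-- `glMulAut A v` is `v` times the image of `v` under `A - 1`. -/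
theorem toAdd_glMulAut {n : ℕ} (A : GL (Fin n) ℤ) (v : Multiplicative (Fin n → ℤ)) :
    (glMulAut A v).toAdd =
      Matrix.toLin' ((A : Matrix (Fin n) (Fin n) ℤ) - 1) v.toAdd + v.toAdd := by
  have h : (glMulAut A v).toAdd = (A : Matrix (Fin n) (Fin n) ℤ).mulVec v.toAdd := rfl
  rw [h, Matrix.toLin'_apply, Matrix.sub_mulVec, Matrix.one_mulVec, sub_add_cancel]

/-- In the abelianization, the action of the right factor on the left factor becomes trivial. -/
theorem Abelianization.of_inl_aut {N G : Type*} [Group N] [Group G] (φ : G →* MulAut N)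
    (g : G) (v : N) :
    Abelianization.of (SemidirectProduct.inl (φ g v) : SemidirectProduct N G φ) =
      Abelianization.of (SemidirectProduct.inl v) := by
  rw [SemidirectProduct.inl_aut, map_mul, map_mul, map_inv, map_inv, mul_inv_cancel_comm]

/-- The projection of `ℤⁿ ⋊_A ℤ` onto `(ℤⁿ ⧸ im (A − 1)) × ℤ`. -/
noncomputable def ZSemidirect.toCoinvariantsProd {n : ℕ} (A : GL (Fin n) ℤ) :
    ZSemidirect A →* Multiplicative
      (((Fin n → ℤ) ⧸
          LinearMap.range (Matrix.toLin' ((A : Matrix (Fin n) (Fin n) ℤ) - 1))) × ℤ) :=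
  SemidirectProduct.lift
    (AddMonoidHom.toMultiplicative
      ((AddMonoidHom.inl _ ℤ).comp (Submodule.mkQ _).toAddMonoidHom))
    (AddMonoidHom.toMultiplicative (AddMonoidHom.inr _ ℤ)) <| by
      intro g
      refine MonoidHom.ext fun v => ?_
      simp only [MonoidHom.comp_apply, MulEquiv.coe_toMonoidHom, MulAut.conj_apply,
        mul_inv_cancel_comm]
      refine MulAut.apply_zpow_of_invariant _ (glMulAut A) (fun w => ?_) g.toAdd v
      refine congrArg (fun q => Multiplicative.ofAdd (q, (0 : ℤ))) ?_
      refine (Submodule.Quotient.eq _).2 ?_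
      exact ⟨w.toAdd, eq_sub_of_add_eq (toAdd_glMulAut A w).symm⟩

theorem ZSemidirect.toCoinvariantsProd_apply {n : ℕ} (A : GL (Fin n) ℤ) (x : ZSemidirect A) :
    ZSemidirect.toCoinvariantsProd A x =
      Multiplicative.ofAdd (Submodule.Quotient.mk x.left.toAdd, x.right.toAdd) := by
  refine congrArg Multiplicative.ofAdd (Prod.ext ?_ ?_)
  · exact add_zero _
  · exact zero_add _

/-- The abelianization of `ℤⁿ ⋊_A ℤ` is isomorphic to `(ℤⁿ ⧸ im (A − 1)) × ℤ`,
where `A − 1` is viewed as a `ℤ`-linear endomorphism of `ℤⁿ = Fin n → ℤ`. -/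
theorem stmt5 {n : ℕ} (hn : 1 ≤ n) (A : GL (Fin n) ℤ) :
    Nonempty (Abelianization (ZSemidirect A) ≃*
      Multiplicative
        (((Fin n → ℤ) ⧸
            LinearMap.range
              (Matrix.toLin' ((A : Matrix (Fin n) (Fin n) ℤ) - 1))) × ℤ)) := by
  refine ⟨MulEquiv.ofBijective (Abelianization.lift (ZSemidirect.toCoinvariantsProd A)) ⟨?_, ?_⟩⟩
  · rw [injective_iff_map_eq_one]
    intro y hy
    obtain ⟨x, rfl⟩ := QuotientGroup.mk_surjective y
    change Abelianization.of x = 1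
    have hx : ZSemidirect.toCoinvariantsProd A x = 1 := hy
    rw [ZSemidirect.toCoinvariantsProd_apply] at hx
    have hl := congrArg (fun q => q.toAdd.1) hx
    have hr : x.right = 1 := congrArg (fun q => q.toAdd.2) hx
    obtain ⟨w, hw⟩ := (Submodule.Quotient.mk_eq_zero _).1 hl
    have hleft : x.left = glZAction A (Multiplicative.ofAdd 1) (Multiplicative.ofAdd w) *
        (Multiplicative.ofAdd w)⁻¹ := by
      rw [glZAction_ofAdd_one, eq_mul_inv_iff_mul_eq]
      apply Multiplicative.toAdd.injective
      rw [toAdd_glMulAut, toAdd_mul, ← hw, toAdd_ofAdd]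
    rw [← SemidirectProduct.inl_left_mul_inr_right x, hr, hleft, map_one SemidirectProduct.inr,
      mul_one, map_mul, map_mul, Abelianization.of_inl_aut, ← map_mul, ← map_mul, mul_inv_cancel, map_one, map_one]
  · intro z
    obtain ⟨v, hv⟩ := Submodule.Quotient.mk_surjective _ z.toAdd.1
    refine ⟨Abelianization.of ⟨Multiplicative.ofAdd v, Multiplicative.ofAdd z.toAdd.2⟩, ?_⟩
    rw [Abelianization.lift_apply_of, ZSemidirect.toCoinvariantsProd_apply]
    exact congrArg Multiplicative.ofAdd (Prod.ext hv rfl)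
end

section
/- Let G be a group and let z be an element of infinite order lying in the center of G, such that the quotient group G ⧸ Subgroup.zpowers z is isomorphic to ℤ × ℤ. Then for every natural number p ≥ 2, there is no group homomorphism φ : G → FreeGroup (Fin p) whose range is a subgroup of finite index in FreeGroup (Fin p). -/
open scoped commutatorElement

/-- If `G ⧸ N` is commutative and `N` is central, then every commutator in `G` is central. -/
theorem commutatorElement_mem_center_of_quotient_comm {G : Type*} [Group G] {N : Subgroup G}
    [N.Normal] (hN : N ≤ Subgroup.center G) (hcomm : ∀ a b : G ⧸ N, a * b = b * a) (g h : G) :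
    ⁅g, h⁆ ∈ Subgroup.center G := by
  apply hN
  rw [← QuotientGroup.eq_one_iff]
  change ⁅(QuotientGroup.mk' N) g, (QuotientGroup.mk' N) h⁆ = 1
  exact commutatorElement_eq_one_iff_mul_comm.2 (hcomm _ _)

/-- In a free group, for distinct generators `a`, `b` and positive `m`, `n`, the commutator
`⁅a ^ m, b ^ n⁆` does not commute with `a ^ m`. The proof maps `a` to `x ↦ 2 * x` and every other
generator to `x ↦ x + 1` in the affine group of `ℚ`. -/
theorem FreeGroup.not_commute_commutatorElement_of_pow {α : Type*} {i j : α} (hij : i ≠ j)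
    {m n : ℕ} (hm : m ≠ 0) (hn : n ≠ 0) :
    ¬ Commute ⁅FreeGroup.of i ^ m, FreeGroup.of j ^ n⁆ (FreeGroup.of i ^ m) := by
  classical
  intro hc
  let A : Equiv.Perm ℚ := Equiv.mulRight₀ 2 two_ne_zero
  let B : Equiv.Perm ℚ := Equiv.addRight 1
  have hA : ∀ (k : ℕ) (x : ℚ), (A ^ k) x = x * 2 ^ k := by
    intro k
    induction k with
    | zero => simp
    | succ k ih =>
      intro x
      rw [pow_succ, Equiv.Perm.mul_apply, ih]
      simp only [A, Equiv.mulRight₀_apply]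
      ring
  have hB : ∀ (k : ℕ) (x : ℚ), (B ^ k) x = x + k := by
    intro k x
    simp [B]
  have hA' : ∀ x : ℚ, (A ^ m)⁻¹ x = x / 2 ^ m := by
    intro x
    rw [Equiv.Perm.inv_eq_iff_eq, hA]
    field_simp
  have hB' : ∀ x : ℚ, (B ^ n)⁻¹ x = x - n := by
    intro x
    rw [Equiv.Perm.inv_eq_iff_eq, hB]
    ring
  have h := hc.map (FreeGroup.lift fun k => if k = i then A else B)
  simp only [map_commutatorElement, map_pow, FreeGroup.lift_apply_of, if_true, hij.symm,
    if_false] at h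
  have h0 := congrArg (fun σ : Equiv.Perm ℚ => σ 0) h.eq
  simp only [commutatorElement_def, Equiv.Perm.mul_apply, hA, hB, hA', hB'] at h0
  have h2 : (1 : ℚ) < 2 ^ m := one_lt_pow₀ one_lt_two hm
  have hn' : (0 : ℚ) < n := by positivity
  field_simp at h0
  nlinarith [mul_pos hn' (mul_pos (sub_pos.2 h2) (sub_pos.2 h2))]

/-- Nil³ argument: if `G` has a central element `z` of infinite order with
`G ⧸ zpowers z ≅ ℤ × ℤ`, then no homomorphism `G → F_p` (`p ≥ 2`) has
finite-index range. -/
theorem stmt8 {G : Type*} [Group G] (z : G)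
    (hzord : ¬ IsOfFinOrder z) (hzc : z ∈ Subgroup.center G)
    [hnorm : (Subgroup.zpowers z).Normal]
    (hq : Nonempty ((G ⧸ Subgroup.zpowers z) ≃* Multiplicative (ℤ × ℤ)))
    (p : ℕ) (hp : 2 ≤ p) :
    ¬ ∃ φ : G →* FreeGroup (Fin p), φ.range.index ≠ 0 := by
  rintro ⟨φ, hφ⟩
  obtain ⟨e⟩ := hq
  have hcomm : ∀ a b : G ⧸ Subgroup.zpowers z, a * b = b * a := fun a b =>
    e.injective (by rw [map_mul, map_mul, mul_comm])
  let i : Fin p := ⟨0, by omega⟩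
  let j : Fin p := ⟨1, by omega⟩
  have hij : i ≠ j := by simp [i, j]
  obtain ⟨m, hm, -, g, hg⟩ := Subgroup.exists_pow_mem_of_index_ne_zero hφ (FreeGroup.of i)
  obtain ⟨n, hn, -, h, hh⟩ := Subgroup.exists_pow_mem_of_index_ne_zero hφ (FreeGroup.of j)
  refine FreeGroup.not_commute_commutatorElement_of_pow hij hm.ne' hn.ne' ?_
  rw [← hg, ← hh, ← map_commutatorElement]
  have hc := commutatorElement_mem_center_of_quotient_comm
    (Subgroup.zpowers_le.2 hzc) hcomm g h
  exact Commute.map (Subgroup.mem_center_iff.1 hc g).symm φ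
end

section
/- Let G be a group containing a subgroup of finite index isomorphic to ℤ³ = (Fin 3 → ℤ). Then for every natural number p ≥ 2, there is no surjective group homomorphism from G onto FreeGroup (Fin p). -/
/-- In a torsion-free group, elements with commuting nontrivial powers commute. -/
theorem Commute.of_pow_pow {F : Type*} [Group F] [IsMulTorsionFree F] {a b : F} {m n : ℕ}
    (hm : m ≠ 0) (hn : n ≠ 0) (h : Commute (a ^ m) (b ^ n)) : Commute a b := by
  have of_pow_left : ∀ {x y : F} {k : ℕ}, k ≠ 0 → Commute (x ^ k) y → Commute x y := by
    intro x y k hk hxy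
    have hconj : y * x * y⁻¹ = x := by
      apply pow_left_injective hk
      simp only [conj_pow]
      rw [← hxy.eq, mul_inv_cancel_right]
    exact (mul_inv_eq_iff_eq_mul.mp hconj).symm
  exact (of_pow_left hn (of_pow_left hm h).symm).symm

/-- Distinct generators of a free group do not commute. -/
theorem FreeGroup.not_commute_of {α : Type*} {i j : α} (hij : i ≠ j) :
    ¬ Commute (FreeGroup.of i) (FreeGroup.of j) := by
  classical
  intro h
  have key := h.map (FreeGroup.lift fun k : α =>
    if k = i then (Equiv.swap 0 1 : Equiv.Perm (Fin 3)) else Equiv.swap 1 2)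
  simp only [FreeGroup.lift_apply_of, if_true, if_neg hij.symm] at key
  exact absurd key.eq (by decide)

/-- ℝ³ argument: a group containing a finite-index subgroup isomorphic to `ℤ³`
admits no surjection onto a free group on `p ≥ 2` generators. -/
theorem stmt9 {G : Type*} [Group G] (K : Subgroup G) (hK : K.index ≠ 0)
    (e : K ≃* Multiplicative (Fin 3 → ℤ)) (p : ℕ) (hp : 2 ≤ p) :
    ¬ ∃ φ : G →* FreeGroup (Fin p), Function.Surjective φ := by
  rintro ⟨φ, hφ⟩
  obtain ⟨a, ha⟩ := hφ (FreeGroup.of ⟨0, by omega⟩)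
  obtain ⟨b, hb⟩ := hφ (FreeGroup.of ⟨1, by omega⟩)
  obtain ⟨m, hm, -, ham⟩ := Subgroup.exists_pow_mem_of_index_ne_zero hK a
  obtain ⟨n, hn, -, hbn⟩ := Subgroup.exists_pow_mem_of_index_ne_zero hK b
  have hcomm : Commute (⟨a ^ m, ham⟩ : K) ⟨b ^ n, hbn⟩ :=
    e.injective (by simp only [map_mul, mul_comm])
  have hpow := (hcomm.map K.subtype).map φ
  simp only [Subgroup.subtype_apply, map_pow, ha, hb] at hpow
  exact FreeGroup.not_commute_of (by simp) (hpow.of_pow_pow hm.ne' hn.ne')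
end

section
/- Let A be an invertible 2×2 integer matrix with det(A − 1) ≠ 0. Then for every natural number p ≥ 2, there is no group homomorphism from ℤ² ⋊_A ℤ to FreeGroup (Fin p) whose range is a subgroup of finite index; in particular there is no surjective homomorphism ℤ² ⋊_A ℤ → FreeGroup (Fin p). -/
open scoped commutatorElement

open Matrix in
/-- The commutators `⁅X, Y⁆` and `⁅X⁻¹, Y⁆` of nontrivial powers of the two standard unipotent
elements of `SL(2, ℤ)` do not commute. -/
theorem not_commute_commutatorElement_of_coe_eq (X Y : SpecialLinearGroup (Fin 2) ℤ) (s t : ℤ)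
    (hs : s ≠ 0) (ht : t ≠ 0) (hX : (X : Matrix (Fin 2) (Fin 2) ℤ) = !![1, s; 0, 1])
    (hY : (Y : Matrix (Fin 2) (Fin 2) ℤ) = !![1, 0; t, 1]) :
    ¬ Commute ⁅X, Y⁆ ⁅X⁻¹, Y⁆ := by
  intro h
  have hentry := congrArg
    (fun M : SpecialLinearGroup (Fin 2) ℤ => (M : Matrix (Fin 2) (Fin 2) ℤ) 0 0) h.eq
  simp only [commutatorElement_def, Matrix.SpecialLinearGroup.coe_mul,
    Matrix.SpecialLinearGroup.coe_inv, inv_inv, hX, hY, adjugate_fin_two_of, mul_fin_two,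
    of_apply, cons_val_zero] at hentry
  have hcube : 2 * (s * t) ^ 3 = 0 := by linear_combination hentry
  simp_all

open Matrix in
/-- Powers of the transpose of `ModularGroup.T`. -/
theorem coe_transpose_T_pow (n : ℕ) :
    ((ModularGroup.T.transpose ^ n : SpecialLinearGroup (Fin 2) ℤ) : Matrix (Fin 2) (Fin 2) ℤ) =
      !![1, 0; (n : ℤ), 1] := by
  have h := ModularGroup.coe_T_zpow n
  rw [zpow_natCast, Matrix.SpecialLinearGroup.coe_pow] at h
  rw [Matrix.SpecialLinearGroup.coe_pow, Matrix.SpecialLinearGroup.coe_transpose,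
    ← transpose_pow, h]
  ext i j
  fin_cases i <;> fin_cases j <;> rfl

/-- In a free group of rank at least two, a subgroup of finite index is not metabelian. -/
theorem FreeGroup.exists_not_commute_commutatorElement {α : Type*} {a b : α} (hab : a ≠ b)
    (H : Subgroup (FreeGroup α)) (hH : H.index ≠ 0) :
    ∃ x ∈ H, ∃ y ∈ H, ¬ Commute ⁅x, y⁆ ⁅x⁻¹, y⁆ := by
  classical
  obtain ⟨m, hm, -, hma⟩ := H.exists_pow_mem_of_index_ne_zero hH (FreeGroup.of a)
  obtain ⟨n, hn, -, hnb⟩ := H.exists_pow_mem_of_index_ne_zero hH (FreeGroup.of b)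
  refine ⟨_, hma, _, hnb, fun h => ?_⟩
  let f : FreeGroup α →* Matrix.SpecialLinearGroup (Fin 2) ℤ :=
    FreeGroup.lift fun i => if i = a then ModularGroup.T else ModularGroup.T.transpose
  have ha : f (FreeGroup.of a) = ModularGroup.T := by simp [f]
  have hb : f (FreeGroup.of b) = ModularGroup.T.transpose := by simp [f, hab.symm]
  have hf := h.map f
  rw [map_commutatorElement, map_commutatorElement, _root_.map_inv, map_pow, map_pow, ha, hb] at hf
  refine not_commute_commutatorElement_of_coe_eq _ _ m n (by positivity) (by positivity) ?_
    (coe_transpose_T_pow n) hf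
  simpa using ModularGroup.coe_T_zpow m

/-- A semidirect product of two commutative groups is metabelian. -/
theorem SemidirectProduct.commute_commutatorElement {N G : Type*} [CommGroup N] [CommGroup G]
    {φ : G →* MulAut N} (w x y z : N ⋊[φ] G) : Commute ⁅w, x⁆ ⁅y, z⁆ := by
  have hcomm (u v : N ⋊[φ] G) : ⁅u, v⁆ ∈ (inl : N →* N ⋊[φ] G).range := by
    rw [range_inl_eq_ker_rightHom, MonoidHom.mem_ker, map_commutatorElement,
      commutatorElement_eq_one_iff_commute]
    exact Commute.all _ _
  obtain ⟨m, hm⟩ := hcomm w x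
  obtain ⟨n, hn⟩ := hcomm y z
  rw [← hm, ← hn]
  exact (Commute.all m n).map inl

/-- Sol³ argument: for an invertible `2 × 2` integer matrix `A` with
`det (A − 1) ≠ 0`, no homomorphism from `ℤ² ⋊_A ℤ` to a free group on `p ≥ 2`
generators has finite-index range; in particular there is no surjective such
homomorphism. -/
theorem stmt10 (A : GL (Fin 2) ℤ)
    (hA : ((A : Matrix (Fin 2) (Fin 2) ℤ) - 1).det ≠ 0)
    (p : ℕ) (hp : 2 ≤ p) :
    (¬ ∃ φ : ZSemidirect A →* FreeGroup (Fin p), φ.range.index ≠ 0) ∧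
      ¬ ∃ φ : ZSemidirect A →* FreeGroup (Fin p), Function.Surjective φ := by
  have hindex : ¬ ∃ φ : ZSemidirect A →* FreeGroup (Fin p), φ.range.index ≠ 0 := by
    rintro ⟨φ, hφ⟩
    have hne : (⟨0, by lia⟩ : Fin p) ≠ ⟨1, by lia⟩ := by simp
    obtain ⟨_, ⟨x, rfl⟩, _, ⟨y, rfl⟩, hxy⟩ :=
      FreeGroup.exists_not_commute_commutatorElement hne φ.range hφ
    apply hxy
    rw [← map_inv, ← map_commutatorElement, ← map_commutatorElement]
    exact (SemidirectProduct.commute_commutatorElement x y x⁻¹ y).map φ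
  refine ⟨hindex, fun ⟨φ, hφ⟩ => hindex ⟨φ, ?_⟩⟩
  rw [MonoidHom.range_eq_top.mpr hφ, Subgroup.index_top]
  exact one_ne_zero
end
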